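/- Let L be a real symmetric n×n matrix with eigendecomposition L = U Λ Uᵀ, where U is orthogonal, let ĝ₀, …, ĝ_J : ℝ → ℝ be spectral kernels, and define the filter operators G_j = U ĝ_j(Λ) Uᵀ for j = 0, …, J. Suppose there are constants 0 < A ≤ B such that A ≤ Σ_{j=0}^{J} ĝ_j(λᵢ)² ≤ B for every eigenvalue λᵢ of L (i = 1, …, n). Then for every x ∈ ℝⁿ, A‖x‖² ≤ Σ_{j=0}^{J} ‖G_j x‖² ≤ B‖x‖²; i.e., the collection of scaling and wavelet operators forms a frame, so the graph wavelet transform x ↦ (G₀ x, …, G_J x) is injective and hence invertible on its image. -/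

import Mathlib

open Matrix

theorem sum_sq_mulVec_of_orth {n : ℕ} (V : Matrix (Fin n) (Fin n) ℝ) (hV : Vᵀ * V = 1)
    (y : Fin n → ℝ) : ∑ i, ((V *ᵥ y) i) ^ 2 = ∑ i, y i ^ 2 := by
  have h : (V *ᵥ y) ⬝ᵥ (V *ᵥ y) = y ⬝ᵥ y := by
    rw [Matrix.dotProduct_mulVec, ← Matrix.mulVec_transpose, Matrix.mulVec_mulVec, hV,
      Matrix.one_mulVec]
  simpa [dotProduct, sq] using h

/-- **Frame property of the graph wavelet transform.** If the spectral kernels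
`ĝ₀, …, ĝ_J` satisfy `A ≤ Σⱼ ĝⱼ(λᵢ)² ≤ B` on every eigenvalue of `L = U Λ Uᵀ`
(with `0 < A ≤ B`), then the filter operators `Gⱼ = U ĝⱼ(Λ) Uᵀ` form a frame:
`A ‖x‖² ≤ Σⱼ ‖Gⱼ x‖² ≤ B ‖x‖²` for every `x ∈ ℝⁿ` (Euclidean norm), and hence the
graph wavelet transform `x ↦ (G₀ x, …, G_J x)` is injective. -/
theorem graph_wavelet_frame {n J : ℕ} (L U : Matrix (Fin n) (Fin n) ℝ)
    (lam : Fin n → ℝ)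
    (hsymm : L.IsSymm)
    (hU : U * Uᵀ = 1) (hU' : Uᵀ * U = 1)
    (hdec : L = U * Matrix.diagonal lam * Uᵀ)
    (g : ℕ → ℝ → ℝ)
    (Gop : ℕ → Matrix (Fin n) (Fin n) ℝ)
    (hG : ∀ j, Gop j = U * Matrix.diagonal (fun i => g j (lam i)) * Uᵀ)
    (A B : ℝ) (hA : 0 < A) (hAB : A ≤ B)
    (hlower : ∀ i : Fin n, A ≤ ∑ j ∈ Finset.range (J + 1), (g j (lam i)) ^ 2)
    (hupper : ∀ i : Fin n, ∑ j ∈ Finset.range (J + 1), (g j (lam i)) ^ 2 ≤ B) :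
    (∀ x : Fin n → ℝ,
        A * (∑ i, x i ^ 2)
            ≤ ∑ j ∈ Finset.range (J + 1), ∑ i, ((Gop j *ᵥ x) i) ^ 2
        ∧ ∑ j ∈ Finset.range (J + 1), ∑ i, ((Gop j *ᵥ x) i) ^ 2
            ≤ B * (∑ i, x i ^ 2))
      ∧ Function.Injective (fun x : Fin n → ℝ => fun j : Fin (J + 1) => Gop j *ᵥ x) := by
  have key : ∀ x : Fin n → ℝ,
      ∑ j ∈ Finset.range (J + 1), ∑ i, ((Gop j *ᵥ x) i) ^ 2
        = ∑ i, (∑ j ∈ Finset.range (J + 1), (g j (lam i)) ^ 2) * ((Uᵀ *ᵥ x) i) ^ 2 := by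
    intro x
    simp_rw [Finset.sum_mul]
    rw [Finset.sum_comm (s := Finset.univ)]
    refine Finset.sum_congr rfl fun j _ => ?_
    rw [hG j, ← Matrix.mulVec_mulVec, ← Matrix.mulVec_mulVec, sum_sq_mulVec_of_orth U hU']
    refine Finset.sum_congr rfl fun i _ => ?_
    rw [Matrix.mulVec_diagonal, mul_pow]
  have hx : ∀ x : Fin n → ℝ, ∑ i, x i ^ 2 = ∑ i, ((Uᵀ *ᵥ x) i) ^ 2 := fun x =>
    (sum_sq_mulVec_of_orth Uᵀ (by rw [Matrix.transpose_transpose, hU]) x).symm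
  have main : ∀ x : Fin n → ℝ,
        A * (∑ i, x i ^ 2)
            ≤ ∑ j ∈ Finset.range (J + 1), ∑ i, ((Gop j *ᵥ x) i) ^ 2
        ∧ ∑ j ∈ Finset.range (J + 1), ∑ i, ((Gop j *ᵥ x) i) ^ 2
            ≤ B * (∑ i, x i ^ 2) := by
    intro x
    rw [key, hx, Finset.mul_sum, Finset.mul_sum]
    exact ⟨Finset.sum_le_sum fun i _ => mul_le_mul_of_nonneg_right (hlower i) (sq_nonneg _),
      Finset.sum_le_sum fun i _ => mul_le_mul_of_nonneg_right (hupper i) (sq_nonneg _)⟩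
  refine ⟨main, ?_⟩
  intro x y hxy
  have hz : ∑ j ∈ Finset.range (J + 1), ∑ i, ((Gop j *ᵥ (x - y)) i) ^ 2 = 0 := by
    refine Finset.sum_eq_zero fun j hj => Finset.sum_eq_zero fun i _ => ?_
    have h : Gop j *ᵥ x = Gop j *ᵥ y := congrFun hxy ⟨j, Finset.mem_range.mp hj⟩
    rw [Matrix.mulVec_sub, h]
    simp
  have h1 := (main (x - y)).1
  rw [hz] at h1
  have hnn : ∀ i ∈ Finset.univ, 0 ≤ (x - y) i ^ 2 := fun i _ => sq_nonneg _
  have h2 : ∑ i, (x - y) i ^ 2 = 0 :=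
    le_antisymm (nonpos_of_mul_nonpos_right h1 hA) (Finset.sum_nonneg hnn)
  funext i
  have h3 := (Finset.sum_eq_zero_iff_of_nonneg hnn).mp h2 i (Finset.mem_univ i)
  exact sub_eq_zero.mp (pow_eq_zero_iff two_ne_zero |>.mp h3)
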